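/- The group SL_*(2,A_m) has the Bruhat presentation: it is generated by h(t) (t ∈ A_m^×), u(b) (b ∈ A_m^s) and w, and for every group K, every pair of maps H : A_m^× → K, U : A_m^s → K and every element W_0 ∈ K satisfying (1) H(t_1)H(t_2) = H(t_1 t_2), (2) U(b_1)U(b_2) = U(b_1 + b_2), (3) H(t)U(b) = U(t b t*) H(t), (4) W_0² = H(−1), (5) W_0 H(t) = H((t*)^{-1}) W_0 for all t, t_1, t_2 ∈ A_m^×, b, b_1, b_2 ∈ A_m^s, and (6) U(t) W_0 U(t^{-1}) W_0 U(t) = W_0 H(−t^{-1}) for all t ∈ A_m^× ∩ A_m^s, there exists a unique group homomorphism φ : SL_*(2,A_m) → K with φ(h(t)) = H(t), φ(u(b)) = U(b) and φ(w) = W_0. -/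

import Mathlib

open Polynomial

set_option synthInstance.maxHeartbeats 1000000

/-- The truncated polynomial algebra `A_m = k[x]/⟨x^m⟩`. -/
abbrev TruncPoly (k : Type*) [Field k] (m : ℕ) :=
  Polynomial k ⧸ Ideal.span {(Polynomial.X : Polynomial k) ^ m}

/-- The class of `x` in `A_m = k[x]/⟨x^m⟩`. -/
noncomputable def xbar (k : Type*) [Field k] (m : ℕ) : TruncPoly k m :=
  Ideal.Quotient.mk _ (Polynomial.X : Polynomial k)

/-- The set `SL_*(2,A)` for a commutative ring `A` equipped with an involution `σ`. -/
def SLstarSet {A : Type*} [CommRing A] (σ : A → A) : Set (Matrix (Fin 2) (Fin 2) A) :=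
  {g | g 0 0 * σ (g 0 1) = g 0 1 * σ (g 0 0) ∧
       g 1 0 * σ (g 1 1) = g 1 1 * σ (g 1 0) ∧
       σ (g 0 0) * g 1 0 = σ (g 1 0) * g 0 0 ∧
       σ (g 0 1) * g 1 1 = σ (g 1 1) * g 0 1 ∧
       g 0 0 * σ (g 1 1) - g 0 1 * σ (g 1 0) = 1 ∧
       σ (g 0 0) * g 1 1 - σ (g 1 0) * g 0 1 = 1}

/-- The Bruhat generator `h(t) = [[t, 0],[0, (t*)⁻¹]]`. -/
def hM {A : Type*} [CommRing A] (σ : A →* A) (t : Aˣ) : Matrix (Fin 2) (Fin 2) A :=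
  !![(t : A), 0; 0, ((Units.map σ t)⁻¹ : Aˣ)]

/-- The Bruhat generator `u(s) = [[1, s],[0, 1]]`. -/
def uM {A : Type*} [CommRing A] (s : A) : Matrix (Fin 2) (Fin 2) A :=
  !![1, s; 0, 1]

/-- The Bruhat generator `w = [[0, 1],[−1, 0]]`. -/
def wM (A : Type*) [CommRing A] : Matrix (Fin 2) (Fin 2) A :=
  !![0, 1; -1, 0]

/-!
The Bruhat relations alone already decompose the group generated by `h(t)`, `u(b)` and `w`: since
`A^s` is a local ring, every element has the form `u(x) h(t) w u(y)`, or is carried by left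
multiplication by `w` to such an element with `x` not invertible. The delicate case is
`w u(b) w⁻¹ · u(x) h(t) w u(y)` with `x` not invertible: it is settled by the braid relation when
`b` is a unit, and otherwise by splitting `b` into the units `1` and `b - 1`.

Now apply this in `SL_*(2, A) × K` to the pairs `(h(t), H(t))`, `(u(b), U(b))`, `(w, W₀)`. The
matrix `u(x) h(t) w u(y)` has an invertible lower left entry, so it is never `1`, and it equals `w`
only for `x = y = 0`, `t = 1`. Hence the subgroup generated by the pairs meets `1 × K` trivially,
and it is the graph of the required homomorphism.
-/

theorem existsUnique_monoidHom_of_closure {G K : Type*} [Group G] [Group K] {S : Set (G × K)}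
    (closure_fst : Subgroup.closure (Prod.fst '' S) = ⊤)
    (eq_one : ∀ κ, (1, κ) ∈ Subgroup.closure S → κ = 1) :
    ∃! φ : G →* K, ∀ p ∈ S, φ p.1 = p.2 := by
  let π := (MonoidHom.fst G K).comp (Subgroup.closure S).subtype
  have π_injective : Function.Injective π := by
    refine (injective_iff_map_eq_one π).2 ?_
    rintro ⟨⟨g, κ⟩, hp⟩ (rfl : g = 1)
    obtain rfl := eq_one κ hp
    rfl
  have π_surjective : Function.Surjective π := by
    rw [← MonoidHom.range_eq_top, MonoidHom.range_comp, Subgroup.range_subtype,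
      MonoidHom.map_closure, ← closure_fst]
    rfl
  obtain ⟨φ, hφ⟩ := Subgroup.exists_eq_graph (G := Subgroup.closure S) ⟨π_injective, π_surjective⟩
  refine ⟨φ, fun p hp => ?_, fun ψ hψ => ?_⟩
  · exact MonoidHom.mem_graph.1 (hφ ▸ Subgroup.subset_closure hp)
  · refine MonoidHom.eq_of_eqOn_dense closure_fst ?_
    rintro _ ⟨p, hp, rfl⟩
    exact (hψ p hp).trans (MonoidHom.mem_graph.1 (hφ ▸ Subgroup.subset_closure hp)).symm

section StarCommRing

variable {A : Type*} [CommRing A] [StarRing A]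

/-- The norm `t ↦ t t*` of a commutative star ring, as a multiplicative map to the ring `A^s` of
self-adjoint elements. By commutativity `t b t* = starNorm t * b`, so it records how the torus
elements `h(t)` act on the unipotent elements `u(b)`. -/
def starNorm : A →* selfAdjoint A where
  toFun t := ⟨t * star t, .mul_star_self t⟩
  map_one' := by ext; simp
  map_mul' a b := by ext; simp only [selfAdjoint.val_mul, star_mul]; ring

@[simp]
theorem coe_starNorm (t : A) : (starNorm t : A) = t * star t := rfl

@[simp]
theorem starNorm_star (t : A) : starNorm (star t) = starNorm t := by
  ext; simp [mul_comm]

@[simp]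
theorem starNorm_neg (t : A) : starNorm (-t) = starNorm t := by
  ext; simp

@[simp]
theorem starNorm_coe (b : selfAdjoint A) : starNorm (b : A) = b * b := by
  ext; simp

/-- The inclusion of the ring `A^s` of self-adjoint elements into `A`. -/
def selfAdjointInclusion (A : Type*) [CommRing A] [StarRing A] : selfAdjoint A →+* A where
  __ := (selfAdjoint A).subtype
  map_one' := rfl
  map_mul' _ _ := rfl

/-- A self-adjoint unit `s ∈ (A^s)ˣ`, regarded as a unit of `A`. -/
def selfAdjointUnit : (selfAdjoint A)ˣ →* Aˣ := Units.map (selfAdjointInclusion A)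

@[simp]
theorem coe_selfAdjointUnit (s : (selfAdjoint A)ˣ) :
    (selfAdjointUnit s : A) = ((s : selfAdjoint A) : A) := rfl

theorem coe_inv_selfAdjointUnit (s : (selfAdjoint A)ˣ) :
    (↑(selfAdjointUnit s)⁻¹ : A) = ((↑s⁻¹ : selfAdjoint A) : A) := rfl

@[simp]
theorem star_selfAdjointUnit (s : (selfAdjoint A)ˣ) :
    star (selfAdjointUnit s) = selfAdjointUnit s :=
  Units.ext selfAdjoint.star_val_eq

instance isLocalHom_selfAdjointInclusion : IsLocalHom (selfAdjointInclusion A) where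
  map_nonunit := by
    rintro b ⟨t, ht⟩
    have star_t : star t = t := Units.ext (by rw [Units.coe_star, ht]; exact b.2)
    have inv_selfAdjoint : IsSelfAdjoint (↑t⁻¹ : A) := by
      rw [isSelfAdjoint_iff, ← Units.coe_star_inv, star_t]
    refine .of_mul_eq_one ⟨↑t⁻¹, inv_selfAdjoint⟩ (Subtype.ext ?_)
    rw [selfAdjoint.val_mul, selfAdjoint.val_one, show (b : A) = t from ht.symm, Units.mul_inv]

instance isLocalRing_selfAdjoint [IsLocalRing A] : IsLocalRing (selfAdjoint A) :=
  (selfAdjointInclusion A).domain_isLocalRing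

end StarCommRing

/-- The Bruhat relations: elements `h(t)`, `u(b)` and `w` of a group `G`, indexed by the units `t`
and the self-adjoint elements `b` of a commutative star ring `A`, which satisfy the defining
relations of the Bruhat presentation of `SL_*(2, A)`. The term `t b t*` is encoded as
`starNorm t * b`, and the units of `A` in `A^s` as the units of the ring `A^s`. -/
structure BruhatSystem (A G : Type*) [CommRing A] [StarRing A] [Group G] where
  h : Aˣ →* G
  u : selfAdjoint A → G
  w : G
  u_add : ∀ b₁ b₂, u (b₁ + b₂) = u b₁ * u b₂
  h_mul_u : ∀ (t : Aˣ) b, h t * u b = u (starNorm (t : A) * b) * h t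
  w_sq : w ^ 2 = h (-1)
  w_mul_h : ∀ t, w * h t = h (star t)⁻¹ * w
  braid : ∀ s : (selfAdjoint A)ˣ, u s * w * u ↑s⁻¹ * w * u s = w * h (-(selfAdjointUnit s)⁻¹)

namespace BruhatSystem

variable {A G K : Type*} [CommRing A] [StarRing A] [Group G] [Group K] (B : BruhatSystem A G)

theorem u_zero : B.u 0 = 1 := by
  simpa using B.u_add 0 0

theorem u_neg (b : selfAdjoint A) : B.u (-b) = (B.u b)⁻¹ := by
  rw [eq_inv_iff_mul_eq_one, ← B.u_add, neg_add_cancel, B.u_zero]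

theorem inv_w : B.w⁻¹ = B.w * B.h (-1) := by
  rw [inv_eq_iff_mul_eq_one, ← mul_assoc, ← pow_two, B.w_sq, ← map_mul, neg_mul_neg, one_mul,
    map_one]

theorem u_mul_h (b : selfAdjoint A) (t : Aˣ) :
    B.u b * B.h t = B.h t * B.u (starNorm (↑t⁻¹ : A) * b) := by
  rw [B.h_mul_u, ← mul_assoc, ← map_mul, Units.mul_inv, map_one, one_mul]

theorem h_mul_w (t : Aˣ) : B.h t * B.w = B.w * B.h (star t)⁻¹ := by
  rw [B.w_mul_h, star_inv, star_star, inv_inv]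

theorem w_mul_u_mul_w (s : (selfAdjoint A)ˣ) :
    B.w * B.u s * B.w =
      B.u (-↑s⁻¹) * B.h (-(selfAdjointUnit s)⁻¹) * B.w * B.u (-↑s⁻¹) := by
  have braid_inv := B.braid s⁻¹
  have star_neg_unit : star (-selfAdjointUnit s) = -selfAdjointUnit s := Units.ext (by simp)
  rw [map_inv (selfAdjointUnit (A := A)), inv_inv, inv_inv, B.w_mul_h, star_neg_unit,
    inv_neg] at braid_inv
  rw [mul_assoc (B.u (-↑s⁻¹)), ← braid_inv, u_neg]
  group

/-- The element `u(x) h(t) w u(y)` of the big Bruhat cell. -/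
def cell (x : selfAdjoint A) (t : Aˣ) (y : selfAdjoint A) : G := B.u x * B.h t * B.w * B.u y

theorem u_mul_cell (b x : selfAdjoint A) (t : Aˣ) (y : selfAdjoint A) :
    B.u b * B.cell x t y = B.cell (b + x) t y := by
  simp only [cell, B.u_add, mul_assoc]

theorem h_mul_cell (r : Aˣ) (x : selfAdjoint A) (t : Aˣ) (y : selfAdjoint A) :
    B.h r * B.cell x t y = B.cell (starNorm (r : A) * x) (r * t) y := by
  simp only [cell, map_mul, ← mul_assoc, B.h_mul_u]

theorem w_mul_cell (x : (selfAdjoint A)ˣ) (t : Aˣ) (y : selfAdjoint A) :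
    B.w * B.cell x t y =
      B.cell (-↑x⁻¹) (-(selfAdjointUnit x)⁻¹ * t) (y - starNorm (t : A) * ↑x⁻¹) := by
  have u_mul_h_inv_star : B.u (-↑x⁻¹) * B.h (star t)⁻¹ =
      B.h (star t)⁻¹ * B.u (-(starNorm (t : A) * ↑x⁻¹)) := by
    rw [u_mul_h, inv_inv, Units.coe_star, starNorm_star, mul_neg]
  calc B.w * B.cell x t y
      = B.w * B.u x * (B.h t * B.w) * B.u y := by simp only [cell, mul_assoc]
    _ = (B.w * B.u x * B.w) * B.h (star t)⁻¹ * B.u y := by rw [h_mul_w]; simp only [mul_assoc]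
    _ = B.u (-↑x⁻¹) * B.h (-(selfAdjointUnit x)⁻¹) * B.w * (B.u (-↑x⁻¹) * B.h (star t)⁻¹) *
          B.u y := by rw [w_mul_u_mul_w]; simp only [mul_assoc]
    _ = B.u (-↑x⁻¹) * B.h (-(selfAdjointUnit x)⁻¹) * (B.w * B.h (star t)⁻¹) *
          (B.u (-(starNorm (t : A) * ↑x⁻¹)) * B.u y) := by
        rw [u_mul_h_inv_star]; simp only [mul_assoc]
    _ = B.cell (-↑x⁻¹) (-(selfAdjointUnit x)⁻¹ * t) (y - starNorm (t : A) * ↑x⁻¹) := by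
        rw [← h_mul_w, ← B.u_add, neg_add_eq_sub, cell, map_mul]; simp only [mul_assoc]

theorem h_neg_one_mul_cell (x : selfAdjoint A) (t : Aˣ) (y : selfAdjoint A) :
    B.h (-1) * B.cell x t y = B.cell x (-t) y := by
  rw [h_mul_cell, Units.val_neg, starNorm_neg, Units.val_one, map_one, one_mul, neg_one_mul]

theorem w_mul_u_mul_inv_w_mul_cell {s z : (selfAdjoint A)ˣ} {x : selfAdjoint A}
    (hz : (z : selfAdjoint A) = x - ↑s⁻¹) (t : Aˣ) (y : selfAdjoint A) :
    B.w * B.u s * B.w⁻¹ * B.cell x t y =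
      B.cell (-(↑s⁻¹ * ↑z⁻¹ * x)) (-((selfAdjointUnit s)⁻¹ * (selfAdjointUnit z)⁻¹ * t))
        (y - starNorm (t : A) * ↑z⁻¹) := by
  have norm_s : starNorm (↑(-(selfAdjointUnit s)⁻¹) : A) = ↑s⁻¹ * ↑s⁻¹ := by
    rw [Units.val_neg, starNorm_neg, ← map_inv, coe_selfAdjointUnit, starNorm_coe]
  have first_coordinate :
      -(↑s⁻¹ : selfAdjoint A) + ↑s⁻¹ * ↑s⁻¹ * -↑z⁻¹ = -(↑s⁻¹ * ↑z⁻¹ * x) := by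
    rw [← add_eq_of_eq_sub hz]
    linear_combination (↑s⁻¹ : selfAdjoint A) * z.inv_mul
  calc B.w * B.u s * B.w⁻¹ * B.cell x t y
      = (B.w * B.u s * B.w) * (B.h (-1) * B.cell x t y) := by rw [inv_w]; simp only [mul_assoc]
    _ = B.u (-↑s⁻¹) * (B.h (-(selfAdjointUnit s)⁻¹) *
          (B.w * (B.u (-↑s⁻¹) * B.cell x (-t) y))) := by
        rw [w_mul_u_mul_w, h_neg_one_mul_cell]; simp only [mul_assoc]
    _ = B.u (-↑s⁻¹) * (B.h (-(selfAdjointUnit s)⁻¹) * B.cell (-↑z⁻¹)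
          (-(selfAdjointUnit z)⁻¹ * -t) (y - starNorm (t : A) * ↑z⁻¹)) := by
        rw [u_mul_cell, neg_add_eq_sub, ← hz, w_mul_cell, Units.val_neg, starNorm_neg]
    _ = _ := by
        rw [h_mul_cell, u_mul_cell, norm_s, first_coordinate, neg_mul_neg, neg_mul, ← mul_assoc]

section Decomposition

/-- The big Bruhat cell `u(A^s) h(Aˣ) w u(A^s)`. -/
def bigCell : Set G := {g | ∃ x t y, g = B.cell x t y}

/-- The elements which left multiplication by `w` carries to a point of the big cell whose first
coordinate is not invertible. When `A^s` is local, they and the big cell exhaust the group generated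
by the system. -/
def smallCell : Set G := {g | ∃ x t y, ¬IsUnit x ∧ B.w * g = B.cell x t y}

/-- The generators `u(b)`, `h(t)` and `w`. -/
def generators : Set G := Set.range B.u ∪ Set.range B.h ∪ {B.w}

theorem u_mem_closure (b : selfAdjoint A) : B.u b ∈ Submonoid.closure B.generators :=
  Submonoid.subset_closure (.inl (.inl ⟨b, rfl⟩))

theorem h_mem_closure (t : Aˣ) : B.h t ∈ Submonoid.closure B.generators :=
  Submonoid.subset_closure (.inl (.inr ⟨t, rfl⟩))

theorem w_mem_closure : B.w ∈ Submonoid.closure B.generators :=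
  Submonoid.subset_closure (.inr rfl)

theorem bigCell_subset_closure : B.bigCell ⊆ Submonoid.closure B.generators := by
  rintro _ ⟨x, t, y, rfl⟩
  exact mul_mem (mul_mem (mul_mem (B.u_mem_closure x) (B.h_mem_closure t)) B.w_mem_closure)
    (B.u_mem_closure y)

theorem inv_w_mem_closure : B.w⁻¹ ∈ Submonoid.closure B.generators := by
  rw [inv_w]
  exact mul_mem B.w_mem_closure (B.h_mem_closure (-1))

theorem h_mul_mem_cells (r : Aˣ) {g : G} (hg : g ∈ B.bigCell ∪ B.smallCell) :
    B.h r * g ∈ B.bigCell ∪ B.smallCell := by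
  rcases hg with ⟨x, t, y, rfl⟩ | ⟨x, t, y, hx, hg⟩
  · exact .inl ⟨_, _, _, B.h_mul_cell r x t y⟩
  · exact .inr ⟨_, _, _, mt isUnit_of_mul_isUnit_right hx,
      by rw [← mul_assoc, B.w_mul_h, mul_assoc, hg, h_mul_cell]⟩

theorem w_mul_mem_cells {g : G} (hg : g ∈ B.bigCell ∪ B.smallCell) :
    B.w * g ∈ B.bigCell ∪ B.smallCell := by
  rcases hg with ⟨x, t, y, rfl⟩ | ⟨x, t, y, -, hg⟩
  · by_cases hx : IsUnit x
    · obtain ⟨x, rfl⟩ := hx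
      exact .inl ⟨_, _, _, B.w_mul_cell x t y⟩
    · exact .inr ⟨_, _, _, hx,
        by rw [← mul_assoc, ← pow_two, B.w_sq, h_neg_one_mul_cell]⟩
  · exact .inl ⟨x, t, y, hg⟩

variable [IsLocalRing (selfAdjoint A)]

theorem exists_w_mul_u_unit_mul_inv_w_mul_cell (s : (selfAdjoint A)ˣ) {x : selfAdjoint A}
    (hx : ¬IsUnit x) (t : Aˣ) (y : selfAdjoint A) :
    ∃ x' t' y', ¬IsUnit x' ∧ B.w * B.u s * B.w⁻¹ * B.cell x t y = B.cell x' t' y' := by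
  obtain ⟨z, hz⟩ : IsUnit (x - ↑s⁻¹) := by
    by_contra sub_nonunit
    have neg_nonunit : ¬IsUnit (-(x - ↑s⁻¹)) := mt (IsUnit.neg_iff _).1 sub_nonunit
    exact IsLocalRing.nonunits_add hx neg_nonunit (by simp)
  have new_nonunit : ¬IsUnit (-(↑s⁻¹ * ↑z⁻¹ * x)) := fun H =>
    hx (isUnit_of_mul_isUnit_right ((IsUnit.neg_iff _).1 H))
  exact ⟨_, _, _, new_nonunit, B.w_mul_u_mul_inv_w_mul_cell hz t y⟩

theorem exists_w_mul_u_mul_inv_w_mul_cell (b : selfAdjoint A) {x : selfAdjoint A}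
    (hx : ¬IsUnit x) (t : Aˣ) (y : selfAdjoint A) :
    ∃ x' t' y', ¬IsUnit x' ∧ B.w * B.u b * B.w⁻¹ * B.cell x t y = B.cell x' t' y' := by
  rcases IsLocalRing.isUnit_or_isUnit_one_sub_self b with ⟨s, rfl⟩ | ⟨s, hs⟩
  · exact B.exists_w_mul_u_unit_mul_inv_w_mul_cell s hx t y
  · obtain ⟨x₁, t₁, y₁, hx₁, h₁⟩ := B.exists_w_mul_u_unit_mul_inv_w_mul_cell (-s) hx t y
    obtain ⟨x₂, t₂, y₂, hx₂, h₂⟩ := B.exists_w_mul_u_unit_mul_inv_w_mul_cell 1 hx₁ t₁ y₁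
    have b_eq : b = ↑(1 : (selfAdjoint A)ˣ) + ↑(-s) := by simp [hs]
    refine ⟨x₂, t₂, y₂, hx₂, ?_⟩
    rw [← h₂, ← h₁, b_eq, B.u_add]
    group

theorem u_mul_mem_cells (b : selfAdjoint A) {g : G} (hg : g ∈ B.bigCell ∪ B.smallCell) :
    B.u b * g ∈ B.bigCell ∪ B.smallCell := by
  rcases hg with ⟨x, t, y, rfl⟩ | ⟨x, t, y, hx, hg⟩
  · exact .inl ⟨_, _, _, B.u_mul_cell b x t y⟩
  · obtain ⟨x', t', y', hx', hcell⟩ := B.exists_w_mul_u_mul_inv_w_mul_cell b hx t y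
    exact .inr ⟨x', t', y', hx', by rw [← hcell, ← hg]; group⟩

theorem one_mem_smallCell : 1 ∈ B.smallCell :=
  ⟨0, 1, 0, not_isUnit_zero, by simp [cell, u_zero]⟩

theorem closure_generators_subset_cells :
    (Subgroup.closure B.generators : Set G) ⊆ B.bigCell ∪ B.smallCell := by
  intro g hg
  induction hg using Subgroup.closure_induction_left with
  | one => exact .inr B.one_mem_smallCell
  | mul_left x hx g _ hg =>
    rcases hx with (⟨b, rfl⟩ | ⟨t, rfl⟩) | rfl
    · exact B.u_mul_mem_cells b hg
    · exact B.h_mul_mem_cells t hg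
    · exact B.w_mul_mem_cells hg
  | inv_mul_cancel x hx g _ hg =>
    rcases hx with (⟨b, rfl⟩ | ⟨t, rfl⟩) | rfl
    · exact B.u_neg b ▸ B.u_mul_mem_cells (-b) hg
    · exact map_inv B.h t ▸ B.h_mul_mem_cells t⁻¹ hg
    · rw [inv_w, mul_assoc]
      exact B.w_mul_mem_cells (B.h_mul_mem_cells (-1) hg)

end Decomposition

/-- The system of pairs in the product group. -/
def prod (B : BruhatSystem A G) (C : BruhatSystem A K) : BruhatSystem A (G × K) where
  h := B.h.prod C.h
  u b := (B.u b, C.u b)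
  w := (B.w, C.w)
  u_add b₁ b₂ := Prod.ext (B.u_add b₁ b₂) (C.u_add b₁ b₂)
  h_mul_u t b := Prod.ext (B.h_mul_u t b) (C.h_mul_u t b)
  w_sq := Prod.ext B.w_sq C.w_sq
  w_mul_h t := Prod.ext (B.w_mul_h t) (C.w_mul_h t)
  braid s := Prod.ext (B.braid s) (C.braid s)

theorem fst_image_generators_prod (B : BruhatSystem A G) (C : BruhatSystem A K) :
    Prod.fst '' (B.prod C).generators = B.generators := by
  simp only [generators, Set.image_union, ← Set.range_comp, Set.image_singleton]
  rfl

end BruhatSystem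

section SpecialLinear

variable {A : Type*} [CommRing A] [StarRing A]

/-- The adjugate of the entrywise star of `g`, which is `[[d*, -b*], [-c*, a*]]` for
`g = [[a, b], [c, d]]`. It is the anti-automorphism of the matrix ring inverting `SL_*(2, A)`. -/
def starAdjugate (g : Matrix (Fin 2) (Fin 2) A) : Matrix (Fin 2) (Fin 2) A :=
  ((starRingEnd A).mapMatrix g).adjugate

theorem starAdjugate_eq (g : Matrix (Fin 2) (Fin 2) A) :
    starAdjugate g = !![star (g 1 1), -star (g 0 1); -star (g 1 0), star (g 0 0)] :=
  Matrix.adjugate_fin_two _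

theorem starAdjugate_one : starAdjugate (1 : Matrix (Fin 2) (Fin 2) A) = 1 := by
  rw [starAdjugate, map_one, Matrix.adjugate_one]

theorem starAdjugate_mul (g g' : Matrix (Fin 2) (Fin 2) A) :
    starAdjugate (g * g') = starAdjugate g' * starAdjugate g := by
  rw [starAdjugate, map_mul, Matrix.adjugate_mul_distrib, starAdjugate, starAdjugate]

theorem starAdjugate_starAdjugate (g : Matrix (Fin 2) (Fin 2) A) :
    starAdjugate (starAdjugate g) = g := by
  simp [starAdjugate_eq, ← Matrix.eta_fin_two g]

theorem mul_starAdjugate_eq_one_iff {g : Matrix (Fin 2) (Fin 2) A} :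
    g * starAdjugate g = 1 ↔
      (g 0 0 * star (g 1 1) - g 0 1 * star (g 1 0) = 1 ∧
        g 0 0 * star (g 0 1) = g 0 1 * star (g 0 0)) ∧
      g 1 0 * star (g 1 1) = g 1 1 * star (g 1 0) ∧
        g 1 1 * star (g 0 0) - g 1 0 * star (g 0 1) = 1 := by
  simp [← Matrix.ext_iff, Matrix.mul_apply, starAdjugate_eq, ← sub_eq_add_neg, neg_add_eq_sub,
    sub_eq_zero, eq_comm (a := g 0 1 * star (g 0 0))]

theorem starAdjugate_mul_eq_one_iff {g : Matrix (Fin 2) (Fin 2) A} :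
    starAdjugate g * g = 1 ↔
      (star (g 1 1) * g 0 0 - star (g 0 1) * g 1 0 = 1 ∧
        star (g 0 1) * g 1 1 = star (g 1 1) * g 0 1) ∧
      star (g 0 0) * g 1 0 = star (g 1 0) * g 0 0 ∧
        star (g 0 0) * g 1 1 - star (g 1 0) * g 0 1 = 1 := by
  simp [← Matrix.ext_iff, Matrix.mul_apply, starAdjugate_eq, ← sub_eq_add_neg, neg_add_eq_sub,
    sub_eq_zero, -Matrix.cons_mul, eq_comm (a := star (g 1 1) * g 0 1)]

theorem mem_SLstarSet_iff {g : Matrix (Fin 2) (Fin 2) A} :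
    g ∈ SLstarSet (star : A → A) ↔ g * starAdjugate g = 1 := by
  constructor
  · rintro ⟨ab, cd, -, -, det, -⟩
    refine mul_starAdjugate_eq_one_iff.2 ⟨⟨det, ab⟩, cd, ?_⟩
    simpa [mul_comm] using congrArg star det
  · intro hg
    obtain ⟨⟨det, ab⟩, cd, -⟩ := mul_starAdjugate_eq_one_iff.1 hg
    obtain ⟨⟨-, bd⟩, ac, det'⟩ := starAdjugate_mul_eq_one_iff.1 (mul_eq_one_comm.1 hg)
    exact ⟨ab, cd, ac, bd, det, det'⟩

variable (A) in
/-- The group `SL_*(2, A)`, as a submonoid of the `2 × 2` matrices with carrier `SLstarSet star`. -/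
def SLstar : Submonoid (Matrix (Fin 2) (Fin 2) A) where
  carrier := SLstarSet (star : A → A)
  one_mem' := by rw [mem_SLstarSet_iff, starAdjugate_one, one_mul]
  mul_mem' {g g'} hg hg' := by
    rw [mem_SLstarSet_iff] at *
    rw [starAdjugate_mul, mul_assoc, ← mul_assoc g', hg', one_mul, hg]

namespace SLstar

instance : Group (SLstar A) where
  inv g := ⟨starAdjugate g, mem_SLstarSet_iff.2 (by
    rw [starAdjugate_starAdjugate]
    exact mul_eq_one_comm.1 (mem_SLstarSet_iff.1 g.2))⟩
  inv_mul_cancel g := Subtype.ext (mul_eq_one_comm.1 (mem_SLstarSet_iff.1 g.2))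

theorem hM_eq (t : Aˣ) :
    hM (starRingEnd A : A →* A) t = !![(t : A), 0; 0, star (↑t⁻¹ : A)] := rfl

theorem star_mul_star_inv (t : Aˣ) : star (t : A) * star (↑t⁻¹ : A) = 1 := by
  rw [← star_mul, Units.inv_mul, star_one]

theorem hM_mem (t : Aˣ) : hM (starRingEnd A : A →* A) t ∈ SLstarSet (star : A → A) := by
  simp [mem_SLstarSet_iff, starAdjugate_eq, hM_eq, mul_comm (star (↑t⁻¹ : A)), star_mul_star_inv,
    Matrix.one_fin_two]

theorem uM_mem {s : A} (hs : star s = s) : uM s ∈ SLstarSet (star : A → A) := by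
  simp [mem_SLstarSet_iff, starAdjugate_eq, uM, hs, Matrix.one_fin_two]

theorem wM_mem : wM A ∈ SLstarSet (star : A → A) := by
  simp [mem_SLstarSet_iff, starAdjugate_eq, wM, Matrix.one_fin_two]

theorem hM_mul_uM (t : Aˣ) (b : A) :
    hM (starRingEnd A : A →* A) t * uM b =
      uM (t * star (t : A) * b) * hM (starRingEnd A : A →* A) t := by
  simp [hM_eq, uM, mul_right_comm _ b, mul_assoc (t : A), star_mul_star_inv]

theorem uM_mul_wM_braid (t : Aˣ) (ht : star t = t) :
    uM (t : A) * wM A * uM (↑t⁻¹ : A) * wM A * uM (t : A) =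
      wM A * hM (starRingEnd A : A →* A) (-t⁻¹) := by
  simp [uM, wM, hM_eq, ht, ← Units.coe_star]

variable (A) in
/-- The Bruhat generators of `SL_*(2, A)` itself. -/
def bruhatSystem : BruhatSystem A (SLstar A) where
  h := MonoidHom.mk' (fun t => ⟨hM (starRingEnd A : A →* A) t, hM_mem t⟩) fun t₁ t₂ =>
    Subtype.ext (by simp [hM_eq, mul_comm])
  u b := ⟨uM (b : A), uM_mem b.2⟩
  w := ⟨wM A, wM_mem⟩
  u_add b₁ b₂ := Subtype.ext (by simp [uM, add_comm])
  h_mul_u t b := Subtype.ext (hM_mul_uM t b)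
  w_sq := Subtype.ext (by simp [wM, hM_eq, pow_two])
  w_mul_h t := Subtype.ext (by simp [wM, hM_eq])
  braid s := Subtype.ext (by
    have braid := uM_mul_wM_braid _ (star_selfAdjointUnit s)
    rw [coe_inv_selfAdjointUnit] at braid
    exact braid)

theorem coe_cell (x : selfAdjoint A) (t : Aˣ) (y : selfAdjoint A) :
    ((bruhatSystem A).cell x t y : Matrix (Fin 2) (Fin 2) A) =
      !![-(x * star (↑t⁻¹ : A)), t - x * star (↑t⁻¹ : A) * y;
         -star (↑t⁻¹ : A), -(star (↑t⁻¹ : A) * y)] := by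
  change uM (x : A) * hM (starRingEnd A : A →* A) t * wM A * uM (y : A) = _
  simp [uM, hM_eq, wM, neg_add_eq_sub]

theorem isUnit_cell_one_zero (x : selfAdjoint A) (t : Aˣ) (y : selfAdjoint A) :
    IsUnit (((bruhatSystem A).cell x t y : Matrix (Fin 2) (Fin 2) A) 1 0) := by
  simp [coe_cell]

theorem cell_eq_w_iff {x : selfAdjoint A} {t : Aˣ} {y : selfAdjoint A} :
    (bruhatSystem A).cell x t y = (bruhatSystem A).w ↔ x = 0 ∧ t = 1 ∧ y = 0 := by
  constructor
  · intro hcell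
    have entries : !![-(x * star (↑t⁻¹ : A)), t - x * star (↑t⁻¹ : A) * y;
        -star (↑t⁻¹ : A), -(star (↑t⁻¹ : A) * y)] = !![0, 1; -1, 0] := by
      rw [← coe_cell, hcell]; rfl
    have star_inv_eq_one : star (↑t⁻¹ : A) = 1 := by simpa using congr_fun₂ entries 1 0
    have x_eq_zero : (x : A) = 0 := by simpa [star_inv_eq_one] using congr_fun₂ entries 0 0
    have y_eq_zero : (y : A) = 0 := by simpa [star_inv_eq_one] using congr_fun₂ entries 1 1
    have t_eq_one : (t : A) = 1 := by simpa [x_eq_zero] using congr_fun₂ entries 0 1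
    exact ⟨Subtype.ext x_eq_zero, Units.ext t_eq_one, Subtype.ext y_eq_zero⟩
  · rintro ⟨rfl, rfl, rfl⟩
    simp [BruhatSystem.cell, BruhatSystem.u_zero]

theorem mem_bigCell_of_isUnit {g : SLstar A} (hg : IsUnit ((g : Matrix (Fin 2) (Fin 2) A) 1 0)) :
    g ∈ (bruhatSystem A).bigCell := by
  obtain ⟨g, hg_mem⟩ := g
  obtain ⟨c, hc⟩ : IsUnit (g 1 0) := hg
  obtain ⟨-, cd, ac, -, det, -⟩ := hg_mem
  rw [← hc] at cd ac det
  have c_inv := c.mul_inv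
  have star_c_inv := star_mul_star_inv c
  have x_selfAdjoint : star (g 0 0 * ↑c⁻¹) = g 0 0 * ↑c⁻¹ := by
    rw [star_mul]
    linear_combination star (↑c⁻¹ : A) * ↑c⁻¹ * ac - star (↑c⁻¹ : A) * star (g 0 0) * c_inv +
      ↑c⁻¹ * g 0 0 * star_c_inv
  have y_selfAdjoint : star (↑c⁻¹ * g 1 1) = ↑c⁻¹ * g 1 1 := by
    rw [star_mul]
    linear_combination star (↑c⁻¹ : A) * ↑c⁻¹ * cd - star (↑c⁻¹ : A) * star (g 1 1) * c_inv +
      ↑c⁻¹ * g 1 1 * star_c_inv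
  have b_eq : g 0 1 = -star (↑c⁻¹ : A) + g 0 0 * (↑c⁻¹ * g 1 1) := by
    rw [← y_selfAdjoint, star_mul]
    linear_combination -g 0 1 * star_c_inv - star (↑c⁻¹ : A) * det
  refine ⟨⟨_, x_selfAdjoint⟩, -(star c)⁻¹, ⟨_, y_selfAdjoint⟩, Subtype.ext ?_⟩
  rw [coe_cell]
  ext i j
  fin_cases i <;> fin_cases j <;> simp [← hc, ← Units.coe_star_inv, b_eq]

theorem isUnit_zero_zero_or_isUnit_one_zero [IsLocalRing A] (g : SLstar A) :
    IsUnit ((g : Matrix (Fin 2) (Fin 2) A) 0 0) ∨ IsUnit ((g : Matrix (Fin 2) (Fin 2) A) 1 0) := by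
  obtain ⟨-, -, -, -, -, det⟩ := g.2
  rw [sub_eq_add_neg] at det
  refine (IsLocalRing.isUnit_or_isUnit_of_add_one det).imp ?_ ?_
  · exact fun H => isUnit_star.1 (isUnit_of_mul_isUnit_left H)
  · exact fun H => isUnit_star.1 (isUnit_of_mul_isUnit_left ((IsUnit.neg_iff _).1 H))

theorem closure_generators [IsLocalRing A] :
    Submonoid.closure (bruhatSystem A).generators = ⊤ := by
  refine eq_top_iff.2 fun g _ => ?_
  rcases isUnit_zero_zero_or_isUnit_one_zero g with ha | hc
  · have w_mul_mem : (bruhatSystem A).w * g ∈ (bruhatSystem A).bigCell := by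
      refine mem_bigCell_of_isUnit ?_
      change IsUnit ((wM A * (g : Matrix (Fin 2) (Fin 2) A)) 1 0)
      simpa [wM, Matrix.mul_apply] using ha
    rw [← inv_mul_cancel_left (bruhatSystem A).w g]
    exact mul_mem (bruhatSystem A).inv_w_mem_closure
      ((bruhatSystem A).bigCell_subset_closure w_mul_mem)
  · exact (bruhatSystem A).bigCell_subset_closure (mem_bigCell_of_isUnit hc)

theorem SLstarSet_subset_closure [IsLocalRing A] :
    SLstarSet (star : A → A) ⊆ Submonoid.closure
      ({g | ∃ s : A, star s = s ∧ g = uM s} ∪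
       {g | ∃ t : Aˣ, g = hM (starRingEnd A : A →* A) t} ∪ {wM A}) := by
  have map_closure : (Submonoid.closure (bruhatSystem A).generators).map (SLstar A).subtype =
      SLstar A := by
    rw [closure_generators, ← MonoidHom.mrange_eq_map, Submonoid.mrange_subtype]
  change ((SLstar A : Submonoid _) : Set (Matrix (Fin 2) (Fin 2) A)) ⊆ _
  rw [← map_closure, MonoidHom.map_mclosure]
  refine Submonoid.closure_mono ?_
  rintro _ ⟨_, (⟨b, rfl⟩ | ⟨t, rfl⟩) | rfl, rfl⟩
  · exact .inl (.inl ⟨b, b.2, rfl⟩)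
  · exact .inl (.inr ⟨t, rfl⟩)
  · exact .inr rfl

variable {K : Type*} [Group K] (C : BruhatSystem A K)

theorem eq_one_of_mem_closure_prod [IsLocalRing A] {κ : K}
    (hκ : (1, κ) ∈ Subgroup.closure ((bruhatSystem A).prod C).generators) : κ = 1 := by
  rcases BruhatSystem.closure_generators_subset_cells _ hκ with ⟨x, t, y, h⟩ | ⟨x, t, y, -, h⟩
  · have cell_eq_one : (bruhatSystem A).cell x t y = 1 := congrArg Prod.fst h.symm
    have := isUnit_cell_one_zero x t y
    simp [cell_eq_one] at this
  · have cell_eq_w : (bruhatSystem A).cell x t y = (bruhatSystem A).w :=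
      (congrArg Prod.fst h.symm).trans (mul_one _)
    obtain ⟨rfl, rfl, rfl⟩ := cell_eq_w_iff.1 cell_eq_w
    have w_mul : C.w * κ = C.cell 0 1 0 := congrArg Prod.snd h
    simpa [BruhatSystem.cell, C.u_zero] using w_mul

theorem existsUnique_lift [IsLocalRing A] :
    ∃! φ : SLstar A →* K, (∀ t, φ ((bruhatSystem A).h t) = C.h t) ∧
      (∀ b, φ ((bruhatSystem A).u b) = C.u b) ∧ φ (bruhatSystem A).w = C.w := by
  have closure_fst :
      Subgroup.closure (Prod.fst '' ((bruhatSystem A).prod C).generators) = ⊤ := by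
    rw [BruhatSystem.fst_image_generators_prod]
    exact Subgroup.closure_eq_top_of_mclosure_eq_top closure_generators
  refine (existsUnique_congr fun φ => ?_).1
    (existsUnique_monoidHom_of_closure closure_fst fun κ => eq_one_of_mem_closure_prod C)
  constructor
  · intro hφ
    exact ⟨fun t => hφ _ (.inl (.inr ⟨t, rfl⟩)), fun b => hφ _ (.inl (.inl ⟨b, rfl⟩)),
      hφ _ (.inr rfl)⟩
  · rintro ⟨hh, hu, hw⟩ _ ((⟨b, rfl⟩ | ⟨t, rfl⟩) | rfl)
    exacts [hu b, hh t, hw]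

end SLstar

end SpecialLinear

theorem isLocalRing_quotient_pow {R : Type*} [CommRing R] (M : Ideal R) [M.IsMaximal] {n : ℕ}
    (hn : n ≠ 0) : IsLocalRing (R ⧸ M ^ n) := by
  have : Nontrivial (R ⧸ M ^ n) :=
    Ideal.Quotient.nontrivial_iff.2
      (mt Ideal.pow_eq_top_iff.1 (by simp [hn, Ideal.IsPrime.ne_top']))
  refine IsLocalRing.of_isUnit_or_isUnit_one_sub_self fun a => ?_
  obtain ⟨r, rfl⟩ := Ideal.Quotient.mk_surjective a
  rcases em (r ∈ M) with hr | hr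
  · have one_sub_notMem : 1 - r ∉ M := fun H =>
      ‹M.IsMaximal›.isPrime.one_notMem (by simpa using M.add_mem H hr)
    exact .inr (Ideal.Quotient.isUnit_mk_pow_of_notMem M one_sub_notMem)
  · exact .inl (Ideal.Quotient.isUnit_mk_pow_of_notMem M hr)

theorem isLocalRing_truncPoly (k : Type*) [Field k] {m : ℕ} (hm : m ≠ 0) :
    IsLocalRing (TruncPoly k m) := by
  have : (Ideal.span {(X : k[X])}).IsMaximal :=
    PrincipalIdealRing.isMaximal_of_irreducible irreducible_X
  have := isLocalRing_quotient_pow (Ideal.span {(X : k[X])}) hm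
  rwa [Ideal.span_singleton_pow] at this

theorem truncPoly_algHom_involutive {k : Type*} [Field k] {m : ℕ}
    {σ : TruncPoly k m →ₐ[k] TruncPoly k m}
    (hσ : σ (xbar k m) = xbar k m ∨ σ (xbar k m) = -xbar k m) : Function.Involutive σ := by
  have comp_self : σ.comp σ = AlgHom.id k _ := by
    refine Ideal.Quotient.algHom_ext _ (Polynomial.algHom_ext ?_)
    change σ (σ (xbar k m)) = xbar k m
    rcases hσ with h | h <;> simp [h]
  exact DFunLike.congr_fun comp_self

/-- The star ring structure on a commutative ring given by an involutive endomorphism `σ`. -/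
abbrev starRingOfInvolutive {A : Type*} [CommRing A] (σ : A →+* A) (hσ : Function.Involutive σ) :
    StarRing A where
  star := σ
  star_involutive := hσ
  star_mul a b := by rw [map_mul, mul_comm]
  star_add := map_add σ

theorem SLstar_truncPoly_bruhat_presentation_general (A : Type*) [CommRing A] [StarRing A]
    [IsLocalRing A] :
    (SLstarSet (star : A → A) ⊆ Submonoid.closure
      ({g | ∃ s : A, star s = s ∧ g = uM s} ∪
       {g | ∃ t : Aˣ, g = hM (starRingEnd A : A →* A) t} ∪ {wM A})) ∧
    ∃ (hmul : ∀ g ∈ SLstarSet (star : A → A), ∀ g' ∈ SLstarSet (star : A → A),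
        g * g' ∈ SLstarSet (star : A → A))
      (hh : ∀ t : Aˣ, hM (starRingEnd A : A →* A) t ∈ SLstarSet (star : A → A))
      (hu : ∀ s : A, star s = s → uM s ∈ SLstarSet (star : A → A))
      (hw : wM A ∈ SLstarSet (star : A → A)),
      ∀ (K : Type*) [Group K] (H : Aˣ → K) (U : A → K) (W₀ : K),
        (∀ t₁ t₂, H t₁ * H t₂ = H (t₁ * t₂)) →
        (∀ b₁ b₂, star b₁ = b₁ → star b₂ = b₂ → U b₁ * U b₂ = U (b₁ + b₂)) →
        (∀ (t : Aˣ) (b : A), star b = b → H t * U b = U (t * b * star (t : A)) * H t) →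
        W₀ ^ 2 = H (-1) →
        (∀ t, W₀ * H t = H (star t)⁻¹ * W₀) →
        (∀ t : Aˣ, star (t : A) = t → U t * W₀ * U ↑t⁻¹ * W₀ * U t = W₀ * H (-t⁻¹)) →
        ∃! φ : SLstarSet (star : A → A) → K,
          (∀ g g' : SLstarSet (star : A → A), φ ⟨g * g', hmul g g.2 g' g'.2⟩ = φ g * φ g') ∧
          (∀ t, φ ⟨hM (starRingEnd A : A →* A) t, hh t⟩ = H t) ∧
          (∀ (s : A) (hs : star s = s), φ ⟨uM s, hu s hs⟩ = U s) ∧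
          φ ⟨wM A, hw⟩ = W₀ := by
  refine ⟨SLstar.SLstarSet_subset_closure, fun _ hg _ hg' => (SLstar A).mul_mem hg hg',
    SLstar.hM_mem, fun _ => SLstar.uM_mem, SLstar.wM_mem,
    fun K _ H U W₀ H_mul U_add H_mul_U W₀_sq W₀_mul_H braid => ?_⟩
  let C : BruhatSystem A K :=
    { h := MonoidHom.mk' H fun t₁ t₂ => (H_mul t₁ t₂).symm
      u := fun b => U b
      w := W₀
      u_add := fun b₁ b₂ => (U_add b₁ b₂ b₁.2 b₂.2).symm
      h_mul_u := fun t b => by simpa [mul_right_comm] using H_mul_U t b b.2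
      w_sq := W₀_sq
      w_mul_h := W₀_mul_H
      braid := fun s => braid (selfAdjointUnit s) s.1.2 }
  obtain ⟨φ, ⟨φ_h, φ_u, φ_w⟩, φ_unique⟩ := SLstar.existsUnique_lift C
  refine ⟨φ, ⟨map_mul φ, φ_h, fun s hs => φ_u ⟨s, hs⟩, φ_w⟩, ?_⟩
  rintro ψ ⟨ψ_mul, ψ_h, ψ_u, ψ_w⟩
  let ψHom : SLstar A →* K := MonoidHom.mk' ψ ψ_mul
  exact congrArg DFunLike.coe (φ_unique ψHom ⟨ψ_h, fun b => ψ_u b b.2, ψ_w⟩)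

/-- The group `SL_*(2,A_m)` has the Bruhat presentation: it is
generated by `h(t)` (`t ∈ A_m^×`), `u(b)` (`b ∈ A_m^s`) and `w`, and any assignment
of these generators into a group `K` satisfying the Bruhat relations extends to a
unique homomorphism `SL_*(2,A_m) → K`. -/
theorem SLstar_truncPoly_bruhat_presentation
    {k : Type*} [Field k] [Fintype k] (hodd : Odd (Fintype.card k))
    {m : ℕ} (hm : 0 < m)
    (σ : TruncPoly k m →ₐ[k] TruncPoly k m)
    (hσ : σ (xbar k m) = xbar k m ∨ σ (xbar k m) = -xbar k m) :
    (SLstarSet (⇑σ) ⊆ Submonoid.closure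
      ({g | ∃ s : TruncPoly k m, σ s = s ∧ g = uM s} ∪
       {g | ∃ t : (TruncPoly k m)ˣ, g = hM (σ : TruncPoly k m →* TruncPoly k m) t} ∪
       {wM (TruncPoly k m)})) ∧
    ∃ (hmul : ∀ g ∈ SLstarSet (⇑σ), ∀ g' ∈ SLstarSet (⇑σ), g * g' ∈ SLstarSet (⇑σ))
      (hh : ∀ t : (TruncPoly k m)ˣ,
        hM (σ : TruncPoly k m →* TruncPoly k m) t ∈ SLstarSet (⇑σ))
      (hu : ∀ s : TruncPoly k m, σ s = s → uM s ∈ SLstarSet (⇑σ))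
      (hw : wM (TruncPoly k m) ∈ SLstarSet (⇑σ)),
      ∀ (K : Type) [Group K],
        ∀ (H : (TruncPoly k m)ˣ → K) (U : TruncPoly k m → K) (W₀ : K),
        (∀ t₁ t₂ : (TruncPoly k m)ˣ, H t₁ * H t₂ = H (t₁ * t₂)) →
        (∀ b₁ b₂ : TruncPoly k m, σ b₁ = b₁ → σ b₂ = b₂ → U b₁ * U b₂ = U (b₁ + b₂)) →
        (∀ (t : (TruncPoly k m)ˣ) (b : TruncPoly k m), σ b = b →
          H t * U b = U ((t : TruncPoly k m) * b * σ (t : TruncPoly k m)) * H t) →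
        (W₀ ^ 2 = H (-1)) →
        (∀ t : (TruncPoly k m)ˣ,
          W₀ * H t = H ((Units.map (σ : TruncPoly k m →* TruncPoly k m) t)⁻¹) * W₀) →
        (∀ t : (TruncPoly k m)ˣ, σ (t : TruncPoly k m) = (t : TruncPoly k m) →
          U (t : TruncPoly k m) * W₀ * U (↑t⁻¹ : TruncPoly k m) * W₀ *
              U (t : TruncPoly k m) = W₀ * H (-t⁻¹)) →
        ∃! φ : ↥(SLstarSet (⇑σ)) → K,
          (∀ g g' : ↥(SLstarSet (⇑σ)),
            φ ⟨(g : Matrix (Fin 2) (Fin 2) (TruncPoly k m)) *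
                 (g' : Matrix (Fin 2) (Fin 2) (TruncPoly k m)),
               hmul g g.2 g' g'.2⟩ = φ g * φ g') ∧
          (∀ t : (TruncPoly k m)ˣ,
            φ ⟨hM (σ : TruncPoly k m →* TruncPoly k m) t, hh t⟩ = H t) ∧
          (∀ (s : TruncPoly k m) (hs : σ s = s), φ ⟨uM s, hu s hs⟩ = U s) ∧
          φ ⟨wM (TruncPoly k m), hw⟩ = W₀ := by
  have := isLocalRing_truncPoly k hm.ne'
  let := starRingOfInvolutive (σ : TruncPoly k m →+* TruncPoly k m)
    (truncPoly_algHom_involutive hσ)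
  exact SLstar_truncPoly_bruhat_presentation_general (TruncPoly k m)
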